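/- Let ε ∈ (0, π/6), let r₀ ∈ (1, √2), let v₂, v₃ be potentials satisfying assumptions (i₂)–(iii₂) and (i₃)–(iv₃), and let G = (V,E) be an ε-regular graph. Then there exists E_o ⊆ E such that the graph G_o = (V, E_o) satisfies: (i) θ_ex(γ) < π/6 − ε for every straight path γ of G_o; and (ii) F(G) ≥ F_bond(G_o), with equality in (ii) only if E = E_o, |x−y| = 1 for all x ∈ V and y ∈ N(x,E), and every bond angle of G lies in {π/2, π, 3π/2}. -/

import Mathlib

open scoped Real

noncomputable section

abbrev Pt : Type := EuclideanSpace ℝ (Fin 2)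

/-- The clockwise angle in `[0, 2π)` between the vectors `u` and `v`. -/
noncomputable def cwAngle (u v : Pt) : ℝ :=
  let a := Complex.arg ((⟨u 0, u 1⟩ : ℂ) * (starRingEnd ℂ) (⟨v 0, v 1⟩ : ℂ))
  if a < 0 then a + 2 * π else a

/-- A graph with finitely many vertices in the plane and unordered pairs of distinct
vertices as edges. -/
structure BondGraph where
  V : Set Pt
  finV : V.Finite
  E : Set (Sym2 Pt)
  not_diag : ∀ e ∈ E, ¬ e.IsDiag
  mem_V : ∀ e ∈ E, ∀ x ∈ e, x ∈ V

/-- The neighborhood `N(x, E)`. -/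
def nbhd (G : BondGraph) (x : Pt) : Set Pt := {y | s(x, y) ∈ G.E}

/-- The degree `#N(x, E)`. -/
noncomputable def deg (G : BondGraph) (x : Pt) : ℕ := (nbhd G x).ncard

/-- The bond energy `F_bond(G) = Σ_{x ∈ V} (4 − #N(x,E))`. -/
noncomputable def Fbond (G : BondGraph) : ℤ := ∑ᶠ x ∈ G.V, ((4 : ℤ) - (deg G x : ℤ))

def goodAngles (ε : ℝ) : Set ℝ :=
  Set.Icc (π / 2 - ε) (π / 2 + ε) ∪ Set.Icc (π - ε) (π + ε) ∪
    Set.Icc (3 * π / 2 - ε) (3 * π / 2 + ε)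

/-- `ε`-regularity of a graph. -/
def EpsRegular (ε : ℝ) (G : BondGraph) : Prop :=
  (∀ x y : Pt, s(x, y) ∈ G.E → 1 - ε ≤ dist x y) ∧
  (∀ x y z : Pt, s(x, y) ∈ G.E → s(z, y) ∈ G.E → x ≠ z →
    cwAngle (x - y) (z - y) ∈ goodAngles ε)

/-- The `i`-th vertex of a path (with junk value `0` out of range). -/
def nth (γ : List Pt) (i : ℕ) : Pt := γ.getD i 0

/-- The interior angle `θ_{i+2} = θ_{x_{i+2}, x_{i+1}, x_i}` of a path (`0`-based). -/
noncomputable def pathAngle (γ : List Pt) (i : ℕ) : ℝ :=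
  cwAngle (nth γ (i + 2) - nth γ (i + 1)) (nth γ i - nth γ (i + 1))

/-- The list of (unordered) edges of a path. -/
def pathEdges (γ : List Pt) : List (Sym2 Pt) := (γ.zip γ.tail).map (fun p => s(p.1, p.2))

/-- A straight path of the graph `G`. -/
def IsStraightPath (ε : ℝ) (G : BondGraph) (γ : List Pt) : Prop :=
  2 ≤ γ.length ∧
  (∀ x ∈ γ, x ∈ G.V) ∧
  γ.Chain' (fun a b => s(a, b) ∈ G.E) ∧
  (∀ i : ℕ, i + 2 < γ.length → pathAngle γ i ∈ Set.Icc (π - ε) (π + ε)) ∧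
  (pathEdges γ).Nodup

/-- A path is closed if its first and last points coincide. -/
def IsClosedPath (γ : List Pt) : Prop := γ.head? = γ.getLast?

/-- The angle excess `θ_ex(γ)` of a path. -/
noncomputable def thetaEx (γ : List Pt) : ℝ :=
  ∑ i ∈ Finset.range (γ.length - 2), |pathAngle γ i - π|

/-- Two lists are identified if they agree up to reversal. -/
def revSetoid : Setoid (List Pt) where
  r a b := a = b ∨ a = b.reverse
  iseqv := by
    constructor
    · intro a; exact Or.inl rfl
    · intro a b h
      rcases h with h | h
      · exact Or.inl h.symm
      · right; rw [h, List.reverse_reverse]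
    · intro a b c hab hbc
      rcases hab with h | h <;> rcases hbc with h' | h' <;>
        simp [h, h', List.reverse_reverse]

/-- An (undirected) stratum: a list of points up to reversal. -/
def Stratum : Type := Quotient revSetoid

/-- The length `l(s)` of a stratum. -/
def Stratum.len : Stratum → ℕ :=
  Quotient.lift List.length (by rintro a b (rfl | rfl) <;> simp)

/-- The set of vertices of a stratum. -/
def Stratum.verts : Stratum → Set Pt :=
  Quotient.lift (fun l => {x : Pt | x ∈ l}) (by
    rintro a b (rfl | rfl)
    · rfl
    · ext x; simp)

/-- `γ` is a subpath of `γ'`, up to reversal. -/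
def SubPathUpToRev (γ γ' : List Pt) : Prop := γ <:+: γ' ∨ γ <:+: γ'.reverse

/-- A maximal straight path (maximal with respect to inclusion). -/
def IsMaximalStraight (ε : ℝ) (G : BondGraph) (γ : List Pt) : Prop :=
  IsStraightPath ε G γ ∧
    ∀ γ' : List Pt, IsStraightPath ε G γ' → SubPathUpToRev γ γ' →
      (γ' = γ ∨ γ' = γ.reverse)

/-- `x ∈ V₂^π`: a vertex of degree two whose bond angle lies in `[π−ε, π+ε]`. -/
def V2pi (ε : ℝ) (G : BondGraph) (x : Pt) : Prop :=
  x ∈ G.V ∧ ∃ x₁ x₂ : Pt, x₁ ≠ x₂ ∧ nbhd G x = {x₁, x₂} ∧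
    cwAngle (x₁ - x) (x₂ - x) ∈ Set.Icc (π - ε) (π + ε)

/-- The set of strata `S(G)`: maximal straight paths, together with the degenerate
one-point stratum `(x)` counted twice for `x ∈ V₀` and once for `x ∈ V₁ ∪ V₂^π`
(the `Fin 2` tag realizes the multiplicity). -/
def strataSet (ε : ℝ) (G : BondGraph) : Set (Stratum × Fin 2) :=
  {p | ∃ γ : List Pt, IsMaximalStraight ε G γ ∧ p = (Quotient.mk revSetoid γ, 0)}
  ∪ {p | ∃ x ∈ G.V, deg G x = 0 ∧
      (p = (Quotient.mk revSetoid [x], 0) ∨ p = (Quotient.mk revSetoid [x], 1))}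
  ∪ {p | ∃ x ∈ G.V, (deg G x = 1 ∨ V2pi ε G x) ∧ p = (Quotient.mk revSetoid [x], 0)}

/-- The set of orthogonal strata `S^⊥(s)`. -/
def orthStrata (ε : ℝ) (G : BondGraph) (s : Stratum × Fin 2) : Set (Stratum × Fin 2) :=
  {s' | s' ∈ strataSet ε G ∧ s' ≠ s ∧ (Stratum.verts s.1 ∩ Stratum.verts s'.1).Nonempty}


/-- Assumptions (i₂)–(iii₂) on the two-body potential. -/
structure V2Hyp (ε r0 : ℝ) (v2 : ℝ → EReal) : Prop where
  eq_neg_one : v2 1 = -1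
  ge_neg_one : ∀ r : ℝ, 0 ≤ r → -1 ≤ v2 r
  gt_neg_one : ∀ r : ℝ, 0 ≤ r → r ≠ 1 → -1 < v2 r
  eq_zero : ∀ r : ℝ, r0 ≤ r → v2 r = 0
  repulsive : ∀ r : ℝ, 0 ≤ r → r ≤ 1 - ε → ((ε⁻¹ : ℝ) : EReal) < v2 r

/-- Assumptions (i₃)–(iv₃) on the three-body potential. -/
structure V3Hyp (ε : ℝ) (v3 : ℝ → ℝ) : Prop where
  symm : ∀ θ : ℝ, 0 ≤ θ → θ ≤ 2 * π → v3 θ = v3 (2 * π - θ)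
  zero_pi_half : v3 (π / 2) = 0
  zero_pi : v3 π = 0
  zero_three_pi_half : v3 (3 * π / 2) = 0
  pos : ∀ θ : ℝ, 0 ≤ θ → θ ≤ 2 * π → θ ∉ ({π / 2, π, 3 * π / 2} : Set ℝ) → 0 < v3 θ
  slope : ∀ θ ∈ Set.Icc (π - ε) (π + ε), 4 * (π / 6 - ε)⁻¹ * |θ - π| ≤ v3 θ
  slope_eq : ∀ θ ∈ Set.Icc (π - ε) (π + ε), v3 θ = 4 * (π / 6 - ε)⁻¹ * |θ - π| → θ = π
  large : ∀ θ : ℝ, 0 ≤ θ → θ ≤ 2 * π →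
    θ ∉ Set.Icc (π / 2 - ε) (π / 2 + ε) ∪ Set.Icc (π - ε) (π + ε) ∪
        Set.Icc (3 * π / 2 - ε) (3 * π / 2 + ε) →
    4 / (1 - ε) ^ 2 * (Real.sqrt 2 + 1 / 2) ^ 2 < v3 θ

/-- The length of an (unordered) edge. -/
noncomputable def edgeLen : Sym2 Pt → ℝ :=
  Sym2.lift ⟨fun x y => dist x y, fun x y => dist_comm x y⟩

/-- Ordered triples `(x, y, z)` with edges `{x,y}, {z,y} ∈ E` sharing the vertex `y`
and `x ≠ z`; each unordered pair of distinct edges sharing a vertex corresponds to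
exactly two such triples. -/
def triples (G : BondGraph) : Set (Pt × Pt × Pt) :=
  {t | s(t.1, t.2.1) ∈ G.E ∧ s(t.2.2, t.2.1) ∈ G.E ∧ t.1 ≠ t.2.2}

/-- The excess energy `F_ex(G)`. -/
noncomputable def Fex (v2 : ℝ → EReal) (v3 : ℝ → ℝ) (G : BondGraph) : EReal :=
  (∑ᶠ e ∈ G.E, (v2 (edgeLen e) + 1))
    + (((1 / 2 : ℝ) * ∑ᶠ t ∈ triples G, v3 (cwAngle (t.1 - t.2.1) (t.2.2 - t.2.1)) : ℝ) : EReal)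

/-- The total graph energy `F(G) = F_bond(G) + F_ex(G)`. -/
noncomputable def Fgraph (v2 : ℝ → EReal) (v3 : ℝ → ℝ) (G : BondGraph) : EReal :=
  ((Fbond G : ℝ) : EReal) + Fex v2 v3 G

/-- The clockwise angle lies in `[0, 2π)`. -/
lemma cwAngle_mem_Ico (u v : Pt) : cwAngle u v ∈ Set.Ico 0 (2 * π) := by
  unfold cwAngle
  set a := Complex.arg ((⟨u 0, u 1⟩ : ℂ) * (starRingEnd ℂ) (⟨v 0, v 1⟩ : ℂ))
  have h1 : -π < a := Complex.neg_pi_lt_arg _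
  have h2 : a ≤ π := Complex.arg_le_pi _
  have := Real.pi_pos
  dsimp only
  split_ifs with h
  · constructor <;> linarith
  · constructor <;> linarith

lemma coe_cwAngle (u v : Pt) : (cwAngle u v : Real.Angle) =
    Complex.arg ((⟨u 0, u 1⟩ : ℂ) * (starRingEnd ℂ) (⟨v 0, v 1⟩ : ℂ)) := by
  unfold cwAngle
  dsimp only
  split_ifs with h
  · rw [Real.Angle.coe_add, Real.Angle.coe_two_pi, add_zero]
  · rfl

lemma complex_mk_ne_zero {u : Pt} (hu : u ≠ 0) : (⟨u 0, u 1⟩ : ℂ) ≠ 0 := by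
  intro h
  apply hu
  have h0 := congrArg Complex.re h
  have h1 := congrArg Complex.im h
  ext i
  fin_cases i
  · simpa using h0
  · simpa using h1

lemma coe_cwAngle_eq_sub {u v : Pt} (hu : u ≠ 0) (hv : v ≠ 0) : (cwAngle u v : Real.Angle) =
    (Complex.arg ⟨u 0, u 1⟩ : Real.Angle) - (Complex.arg ⟨v 0, v 1⟩ : Real.Angle) := by
  rw [coe_cwAngle, Complex.arg_mul_coe_angle (complex_mk_ne_zero hu)
    ((map_ne_zero _).2 (complex_mk_ne_zero hv)), Complex.arg_conj_coe_angle, sub_eq_add_neg]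

/-- Exchanging the two vectors replaces a nonzero clockwise angle `θ` by `2π - θ`. -/
lemma cwAngle_swap {u v : Pt} (hu : u ≠ 0) (hv : v ≠ 0) (h : 0 < cwAngle u v) :
    cwAngle v u = 2 * π - cwAngle u v := by
  have key : ((cwAngle v u : ℝ) : Real.Angle) = ((-cwAngle u v : ℝ) : Real.Angle) := by
    rw [Real.Angle.coe_neg, coe_cwAngle_eq_sub hu hv, coe_cwAngle_eq_sub hv hu, neg_sub]
  obtain ⟨k, hk⟩ := Real.Angle.angle_eq_iff_two_pi_dvd_sub.1 key
  obtain ⟨a1, a2⟩ := cwAngle_mem_Ico u v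
  obtain ⟨b1, b2⟩ := cwAngle_mem_Ico v u
  have hp := Real.pi_pos
  have k0 : 0 < k := by
    by_contra hcon
    have : (k : ℝ) ≤ 0 := by exact_mod_cast not_lt.1 hcon
    nlinarith
  have k2 : k < 2 := by
    by_contra hcon
    have : (2 : ℝ) ≤ k := by exact_mod_cast not_lt.1 hcon
    nlinarith
  obtain rfl : k = 1 := by omega
  push_cast at hk
  linarith

/-- Two vectors that are both almost opposite to a third one cannot form a good angle. -/
lemma cwAngle_notMem_goodAngles {ε : ℝ} (hε : ε < π / 6) {u v w : Pt}
    (hu : u ≠ 0) (hv : v ≠ 0) (hw : w ≠ 0)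
    (huv : cwAngle u v ∈ Set.Icc (π - ε) (π + ε)) (huw : cwAngle u w ∈ Set.Icc (π - ε) (π + ε)) :
    cwAngle v w ∉ goodAngles ε := by
  intro hvw
  have hb : π / 2 - ε ≤ cwAngle v w ∧ cwAngle v w ≤ 3 * π / 2 + ε := by
    have := Real.pi_pos
    have h1 := huv.1.trans huv.2
    rcases hvw with (h | h) | h <;> constructor <;> linarith [h.1, h.2]
  have key : ((cwAngle v w : ℝ) : Real.Angle) =
      ((cwAngle u w - cwAngle u v : ℝ) : Real.Angle) := by
    rw [Real.Angle.coe_sub, coe_cwAngle_eq_sub hu hv, coe_cwAngle_eq_sub hu hw,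
      coe_cwAngle_eq_sub hv hw]
    abel
  obtain ⟨k, hk⟩ := Real.Angle.angle_eq_iff_two_pi_dvd_sub.1 key
  have hp := Real.pi_pos
  have k0 : 0 < k := by
    by_contra hcon
    have : (k : ℝ) ≤ 0 := by exact_mod_cast not_lt.1 hcon
    nlinarith [huv.1, huv.2, huw.1, huw.2]
  have k1 : k < 1 := by
    by_contra hcon
    have : (1 : ℝ) ≤ k := by exact_mod_cast not_lt.1 hcon
    nlinarith [huv.1, huv.2, huw.1, huw.2]
  omega

lemma BondGraph.ne_of_mem (G : BondGraph) {x y : Pt} (h : s(x, y) ∈ G.E) : x ≠ y := by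
  intro hxy
  exact G.not_diag _ h (by simp [hxy])

lemma BondGraph.finite_E (G : BondGraph) : G.E.Finite := by
  refine ((G.finV.prod G.finV).image (fun p : Pt × Pt => s(p.1, p.2))).subset ?_
  intro e he
  induction e using Sym2.ind with
  | _ x y => exact ⟨(x, y), ⟨G.mem_V _ he x (by simp), G.mem_V _ he y (by simp)⟩, rfl⟩

lemma BondGraph.finite_triples (G : BondGraph) : (triples G).Finite := by
  refine (G.finV.prod (G.finV.prod G.finV)).subset ?_
  rintro ⟨x, y, z⟩ ⟨h1, h2, -⟩
  exact ⟨G.mem_V _ h1 x (by simp), G.mem_V _ h1 y (by simp), G.mem_V _ h2 z (by simp)⟩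

/-- Straight continuations of an edge through a vertex are unique. -/
lemma EpsRegular.eq_of_straight {ε : ℝ} (hε : ε < π / 6) {G : BondGraph} (hG : EpsRegular ε G)
    {x y z z' : Pt} (hx : s(x, y) ∈ G.E) (hz : s(z, y) ∈ G.E) (hz' : s(z', y) ∈ G.E)
    (h : cwAngle (x - y) (z - y) ∈ Set.Icc (π - ε) (π + ε))
    (h' : cwAngle (x - y) (z' - y) ∈ Set.Icc (π - ε) (π + ε)) : z = z' := by
  by_contra hne
  exact cwAngle_notMem_goodAngles hε (sub_ne_zero.2 (G.ne_of_mem hx))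
    (sub_ne_zero.2 (G.ne_of_mem hz)) (sub_ne_zero.2 (G.ne_of_mem hz')) h h'
    (hG.2 z y z' hz hz' hne)

lemma BondGraph.cwAngle_swap (G : BondGraph) {ε : ℝ} (hε : ε < π / 6) {x y z : Pt}
    (hx : s(x, y) ∈ G.E) (hz : s(z, y) ∈ G.E)
    (h : cwAngle (x - y) (z - y) ∈ Set.Icc (π - ε) (π + ε)) :
    cwAngle (z - y) (x - y) = 2 * π - cwAngle (x - y) (z - y) :=
  _root_.cwAngle_swap (sub_ne_zero.2 (G.ne_of_mem hx)) (sub_ne_zero.2 (G.ne_of_mem hz))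
    (by linarith [h.1, Real.pi_pos])

/-- The `i`-th interior angle of the path `f`. -/
def seqAngle (f : ℕ → Pt) (i : ℕ) : ℝ := cwAngle (f (i + 2) - f (i + 1)) (f i - f (i + 1))

/-- The path `f 0, …, f (n + 1)` with `n` interior angles is a straight path of `G`. -/
structure IsStraightSeq (ε : ℝ) (G : BondGraph) (n : ℕ) (f : ℕ → Pt) : Prop where
  edge : ∀ i ≤ n, s(f i, f (i + 1)) ∈ G.E
  straight : ∀ i < n, seqAngle f i ∈ Set.Icc (π - ε) (π + ε)
  inj : ∀ i ≤ n, ∀ j ≤ n, s(f i, f (i + 1)) = s(f j, f (j + 1)) → i = j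

/-- The angle excess of the path `f 0, …, f (n + 1)`. -/
def seqExcess (n : ℕ) (f : ℕ → Pt) : ℝ := ∑ i ∈ Finset.range n, |seqAngle f i - π|

lemma IsStraightSeq.mono {ε : ℝ} {G G' : BondGraph} (h : G.E ⊆ G'.E) {n : ℕ} {f : ℕ → Pt}
    (hf : IsStraightSeq ε G n f) : IsStraightSeq ε G' n f :=
  ⟨fun i hi => h (hf.edge i hi), hf.straight, hf.inj⟩

lemma IsStraightSeq.edge_swap {ε : ℝ} {G : BondGraph} {n : ℕ} {f : ℕ → Pt}
    (hf : IsStraightSeq ε G n f) {i : ℕ} (hi : i ≤ n) : s(f (i + 1), f i) ∈ G.E :=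
  Sym2.eq_swap ▸ hf.edge i hi

lemma IsStraightSeq.swap_angle {ε : ℝ} (hε : ε < π / 6) {G : BondGraph} {n : ℕ} {f : ℕ → Pt}
    (hf : IsStraightSeq ε G n f) {i : ℕ} (hi : i < n) :
    cwAngle (f i - f (i + 1)) (f (i + 2) - f (i + 1)) = 2 * π - seqAngle f i :=
  G.cwAngle_swap hε (hf.edge_swap (i := i + 1) hi) (hf.edge i hi.le) (hf.straight i hi)

lemma IsStraightSeq.swap_mem {ε : ℝ} (hε : ε < π / 6) {G : BondGraph} {n : ℕ} {f : ℕ → Pt}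
    (hf : IsStraightSeq ε G n f) {i : ℕ} (hi : i < n) :
    cwAngle (f i - f (i + 1)) (f (i + 2) - f (i + 1)) ∈ Set.Icc (π - ε) (π + ε) := by
  rw [hf.swap_angle hε hi]
  have := hf.straight i hi
  constructor <;> linarith [this.1, this.2]

lemma seqAngle_reverse {ε : ℝ} (hε : ε < π / 6) {G : BondGraph} {n : ℕ} {f : ℕ → Pt}
    (hf : IsStraightSeq ε G n f) {i : ℕ} (hi : i < n) :
    seqAngle (fun k => f (n + 1 - k)) i = 2 * π - seqAngle f (n - 1 - i) := by
  rw [← hf.swap_angle hε (by omega)]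
  unfold seqAngle
  have h0 : n + 1 - i = n - 1 - i + 2 := by omega
  have h1 : n + 1 - (i + 1) = n - 1 - i + 1 := by omega
  have h2 : n + 1 - (i + 2) = n - 1 - i := by omega
  simp only [h0, h1, h2]

lemma IsStraightSeq.reverse {ε : ℝ} (hε : ε < π / 6) {G : BondGraph} {n : ℕ} {f : ℕ → Pt}
    (hf : IsStraightSeq ε G n f) : IsStraightSeq ε G n (fun k => f (n + 1 - k)) := by
  have he : ∀ i ≤ n, s(f (n + 1 - i), f (n + 1 - (i + 1))) = s(f (n - i), f (n - i + 1)) := by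
    intro i hi
    rw [Sym2.eq_swap, show n + 1 - (i + 1) = n - i by omega, show n + 1 - i = n - i + 1 by omega]
  refine ⟨fun i hi => ?_, fun i hi => ?_, fun i hi j hj hij => ?_⟩
  · rw [he i hi]
    exact hf.edge _ (by omega)
  · rw [seqAngle_reverse hε hf hi]
    have := hf.straight (n - 1 - i) (by omega)
    constructor <;> linarith [this.1, this.2]
  · rw [he i hi, he j hj] at hij
    have := hf.inj _ (by omega) _ (by omega) hij
    omega

lemma IsStraightSeq.excess_reverse {ε : ℝ} (hε : ε < π / 6) {G : BondGraph} {n : ℕ} {f : ℕ → Pt}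
    (hf : IsStraightSeq ε G n f) : seqExcess n (fun k => f (n + 1 - k)) = seqExcess n f := by
  unfold seqExcess
  rw [← Finset.sum_range_reflect (fun i => |seqAngle f i - π|) n]
  refine Finset.sum_congr rfl fun i hi => ?_
  rw [seqAngle_reverse hε hf (Finset.mem_range.1 hi), ← abs_neg]
  congr 1
  ring

lemma IsStraightSeq.tail {ε : ℝ} {G : BondGraph} {n : ℕ} {f : ℕ → Pt}
    (hf : IsStraightSeq ε G (n + 1) f) : IsStraightSeq ε G n (fun k => f (k + 1)) := by
  refine ⟨fun i hi => hf.edge (i + 1) (by omega), fun i hi => hf.straight (i + 1) (by omega),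
    fun i hi j hj hij => ?_⟩
  have := hf.inj (i + 1) (by omega) (j + 1) (by omega) hij
  omega

/-- The path has angle excess at least `δ`, but not after removal of its first vertex. -/
structure IsCritical (δ : ℝ) (n : ℕ) (f : ℕ → Pt) : Prop where
  le_excess : δ ≤ seqExcess n f
  tail_lt : ∑ i ∈ Finset.Ico 1 n, |seqAngle f i - π| < δ

lemma exists_isCritical {ε δ : ℝ} (hδ : 0 < δ) {G : BondGraph} {n : ℕ} {f : ℕ → Pt}
    (hf : IsStraightSeq ε G n f) (h : δ ≤ seqExcess n f) :
    ∃ m g, IsStraightSeq ε G m g ∧ IsCritical δ m g := by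
  induction n generalizing f with
  | zero => simp [seqExcess] at h; linarith
  | succ n ih =>
    by_cases ht : ∑ i ∈ Finset.Ico 1 (n + 1), |seqAngle f i - π| < δ
    · exact ⟨n + 1, f, hf, h, ht⟩
    · refine ih hf.tail ?_
      rw [Finset.sum_Ico_eq_sum_range] at ht
      refine (not_lt.1 ht).trans_eq (Finset.sum_congr rfl fun i _ => ?_)
      rw [add_comm]
      rfl

open Classical in
/-- The ordered triples of consecutive vertices of a path, in both orientations. -/
def seqTriples (n : ℕ) (f : ℕ → Pt) : Finset (Pt × Pt × Pt) :=
  (Finset.range n).image (fun i => (f (i + 2), f (i + 1), f i)) ∪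
    (Finset.range n).image (fun i => (f i, f (i + 1), f (i + 2)))

lemma mem_seqTriples {n : ℕ} {f : ℕ → Pt} {t : Pt × Pt × Pt} : t ∈ seqTriples n f ↔
    (∃ i < n, (f (i + 2), f (i + 1), f i) = t) ∨ (∃ i < n, (f i, f (i + 1), f (i + 2)) = t) := by
  simp [seqTriples]

lemma IsStraightSeq.ne {ε : ℝ} {G : BondGraph} {n : ℕ} {f : ℕ → Pt}
    (hf : IsStraightSeq ε G n f) {i : ℕ} (hi : i < n) : f i ≠ f (i + 2) := by
  intro h
  have := hf.inj i hi.le (i + 1) hi (by rw [h, Sym2.eq_swap])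
  omega

lemma IsStraightSeq.seqTriples_subset {ε : ℝ} {G : BondGraph} {n : ℕ} {f : ℕ → Pt}
    (hf : IsStraightSeq ε G n f) : ∀ t ∈ seqTriples n f, t ∈ triples G := by
  intro t ht
  rcases mem_seqTriples.1 ht with ⟨i, hi, rfl⟩ | ⟨i, hi, rfl⟩
  · exact ⟨hf.edge_swap (i := i + 1) hi, hf.edge i hi.le, (hf.ne hi).symm⟩
  · exact ⟨hf.edge i hi.le, hf.edge_swap (i := i + 1) hi, hf.ne hi⟩

lemma IsStraightSeq.sum_seqTriples {ε : ℝ} {G : BondGraph} {n : ℕ} {f : ℕ → Pt}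
    (hf : IsStraightSeq ε G n f) (w : Pt × Pt × Pt → ℝ) :
    ∑ t ∈ seqTriples n f, w t = ∑ i ∈ Finset.range n, w (f (i + 2), f (i + 1), f i) +
      ∑ i ∈ Finset.range n, w (f i, f (i + 1), f (i + 2)) := by
  classical
  unfold seqTriples
  rw [Finset.sum_union, Finset.sum_image, Finset.sum_image]
  · intro i hi j hj hij
    simp only [Prod.mk.injEq] at hij
    simp only [Finset.coe_range, Set.mem_Iio] at hi hj
    exact hf.inj i hi.le j hj.le (by rw [hij.1, hij.2.1])
  · intro i hi j hj hij
    simp only [Prod.mk.injEq] at hij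
    simp only [Finset.coe_range, Set.mem_Iio] at hi hj
    exact hf.inj i hi.le j hj.le (by rw [hij.2.2, hij.2.1])
  · rw [Finset.disjoint_left]
    intro t h1 h2
    obtain ⟨i, hi, rfl⟩ := Finset.mem_image.1 h1
    obtain ⟨j, hj, hij⟩ := Finset.mem_image.1 h2
    rw [Finset.mem_range] at hi hj
    simp only [Prod.mk.injEq] at hij
    have e1 := hf.inj j hj.le (i + 1) hi (by rw [hij.1, hij.2.1, Sym2.eq_swap])
    have e2 := hf.inj (j + 1) hj i hi.le (by rw [hij.2.1, hij.2.2, Sym2.eq_swap])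
    omega

/-- The three-body energy carried by a path of large excess. -/
lemma IsStraightSeq.energy_gt {ε : ℝ} (hε : ε < π / 6) {v3 : ℝ → ℝ} (hv3 : V3Hyp ε v3)
    {G : BondGraph} {n : ℕ} {f : ℕ → Pt} (hf : IsStraightSeq ε G n f)
    (h : π / 6 - ε ≤ seqExcess n f) :
    8 < ∑ t ∈ seqTriples n f, v3 (cwAngle (t.1 - t.2.1) (t.2.2 - t.2.1)) := by
  have hδ : 0 < π / 6 - ε := by linarith
  set c := 4 * (π / 6 - ε)⁻¹ with hc
  have hcpos : 0 < c := by positivity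
  have hbound : 4 ≤ c * seqExcess n f := by
    have : c * (π / 6 - ε) = 4 := by rw [hc, mul_assoc, inv_mul_cancel₀ hδ.ne', mul_one]
    nlinarith
  rw [hf.sum_seqTriples]
  have hleft : c * seqExcess n f <
      ∑ i ∈ Finset.range n, v3 (cwAngle (f (i + 2) - f (i + 1)) (f i - f (i + 1))) := by
    unfold seqExcess
    rw [Finset.mul_sum]
    refine Finset.sum_lt_sum (fun i hi => hv3.slope _ (hf.straight i (Finset.mem_range.1 hi))) ?_
    by_contra! hcon
    have hz : seqExcess n f = 0 := by
      refine Finset.sum_eq_zero fun i hi => ?_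
      have hs := hf.straight i (Finset.mem_range.1 hi)
      rw [hv3.slope_eq _ hs (le_antisymm (hcon i hi) (hv3.slope _ hs)), sub_self, abs_zero]
    linarith
  have hright : c * seqExcess n f ≤
      ∑ i ∈ Finset.range n, v3 (cwAngle (f i - f (i + 1)) (f (i + 2) - f (i + 1))) := by
    unfold seqExcess
    rw [Finset.mul_sum]
    refine Finset.sum_le_sum fun i hi => ?_
    have hi := Finset.mem_range.1 hi
    refine le_trans (le_of_eq ?_) (hv3.slope _ (hf.swap_mem hε hi))
    rw [hf.swap_angle hε hi, ← abs_neg]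
    congr 2
    ring
  linarith

lemma IsStraightSeq.agree_forward {ε : ℝ} (hε : ε < π / 6) {G : BondGraph} (hG : EpsRegular ε G)
    {n m : ℕ} {f g : ℕ → Pt} (hf : IsStraightSeq ε G n f) (hg : IsStraightSeq ε G m g)
    {i j : ℕ} (h0 : g i = f j) (h1 : g (i + 1) = f (j + 1)) (t : ℕ) (hi : i + t ≤ m)
    (hj : j + t ≤ n) : g (i + t) = f (j + t) ∧ g (i + t + 1) = f (j + t + 1) := by
  induction t with
  | zero => exact ⟨h0, h1⟩
  | succ t ih =>
    obtain ⟨e0, e1⟩ := ih (by omega) (by omega)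
    refine ⟨e1, ?_⟩
    have a := hf.swap_mem hε (i := j + t) (by omega)
    have b := hg.swap_mem hε (i := i + t) (by omega)
    rw [e0, e1] at b
    have hE := hg.edge_swap (i := i + t + 1) hi
    rw [e1] at hE
    exact hG.eq_of_straight hε (hf.edge (j + t) (by omega)) hE
      (hf.edge_swap (i := j + t + 1) hj) b a

lemma IsStraightSeq.agree_backward {ε : ℝ} (hε : ε < π / 6) {G : BondGraph} (hG : EpsRegular ε G)
    {n m : ℕ} {f g : ℕ → Pt} (hf : IsStraightSeq ε G n f) (hg : IsStraightSeq ε G m g)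
    {i j : ℕ} (h0 : g i = f j) (h1 : g (i + 1) = f (j + 1)) (him : i ≤ m) (hjn : j ≤ n)
    (t : ℕ) (hi : t ≤ i) (hj : t ≤ j) :
    g (i - t) = f (j - t) ∧ g (i - t + 1) = f (j - t + 1) := by
  induction t with
  | zero => exact ⟨h0, h1⟩
  | succ t ih =>
    obtain ⟨e0, e1⟩ := ih (by omega) (by omega)
    obtain ⟨p, hp⟩ : ∃ p, i - t = p + 1 := ⟨i - t - 1, by omega⟩
    obtain ⟨q, hq⟩ : ∃ q, j - t = q + 1 := ⟨j - t - 1, by omega⟩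
    rw [show i - (t + 1) = p by omega, show j - (t + 1) = q by omega]
    rw [hp, hq] at e0 e1
    refine ⟨?_, e0⟩
    have a := hf.straight q (by omega)
    have b := hg.straight p (by omega)
    unfold seqAngle at a b
    rw [e0, e1] at b
    have hE := hg.edge p (by omega)
    rw [e0] at hE
    exact hG.eq_of_straight hε (hf.edge_swap (i := q + 1) (by omega)) hE
      (hf.edge q (by omega)) b a

/-- A straight path that shares an oriented angle with a critical path, but avoids the two extreme
edges of the latter, has small angle excess. -/
lemma IsStraightSeq.excess_lt_of_common {ε δ : ℝ} (hε : ε < π / 6) {G : BondGraph}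
    (hG : EpsRegular ε G) {n m : ℕ} {f g : ℕ → Pt} (hf : IsStraightSeq ε G n f)
    (hcrit : IsCritical δ n f) (hg : IsStraightSeq ε G m g)
    (hfirst : ∀ i ≤ m, s(g i, g (i + 1)) ≠ s(f 0, f 1))
    (hlast : ∀ i ≤ m, s(g i, g (i + 1)) ≠ s(f n, f (n + 1)))
    {i j : ℕ} (hi : i < m) (hj : j < n) (h0 : g i = f j) (h1 : g (i + 1) = f (j + 1)) :
    seqExcess m g < δ := by
  have hij : i < j := by
    by_contra! hcon
    obtain ⟨e0, e1⟩ := hf.agree_backward hε hG hg h0 h1 hi.le hj.le j hcon le_rfl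
    apply hfirst (i - j) (by omega)
    rw [e0, e1, Nat.sub_self]
  have hmn : m + j < n + i := by
    by_contra! hcon
    obtain ⟨e0, e1⟩ := hf.agree_forward hε hG hg h0 h1 (n - j) (by omega) (by omega)
    apply hlast (i + (n - j)) (by omega)
    rw [e0, e1, show j + (n - j) = n by omega]
  obtain ⟨d, rfl⟩ : ∃ d, j = i + d := ⟨j - i, by omega⟩
  have hgf : ∀ k ≤ m + 1, g k = f (k + d) := by
    intro k hk
    rcases le_or_gt k i with hki | hki
    · have := (hf.agree_backward hε hG hg h0 h1 hi.le hj.le (i - k) (by omega) (by omega)).1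
      rwa [show i - (i - k) = k by omega, show i + d - (i - k) = k + d by omega] at this
    · have := (hf.agree_forward hε hG hg h0 h1 (k - i - 1) (by omega) (by omega)).2
      rwa [show i + (k - i - 1) + 1 = k by omega,
        show i + d + (k - i - 1) + 1 = k + d by omega] at this
  refine lt_of_le_of_lt ?_ hcrit.tail_lt
  have : seqExcess m g = ∑ k ∈ Finset.Ico d (m + d), |seqAngle f k - π| := by
    rw [Finset.sum_Ico_eq_sum_range, Nat.add_sub_cancel]
    refine Finset.sum_congr rfl fun k hk => ?_
    have hk := Finset.mem_range.1 hk
    unfold seqAngle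
    rw [hgf k (by omega), hgf (k + 1) (by omega), hgf (k + 2) (by omega), add_comm d k,
      show k + 1 + d = k + d + 1 by omega, show k + 2 + d = k + d + 2 by omega]
  rw [this]
  refine Finset.sum_le_sum_of_subset_of_nonneg (fun k hk => ?_) fun _ _ _ => abs_nonneg _
  rw [Finset.mem_Ico] at hk ⊢
  omega

/-- The unoriented version of `IsStraightSeq.excess_lt_of_common`. -/
lemma IsStraightSeq.excess_lt_of_not_disjoint {ε δ : ℝ} (hε : ε < π / 6) {G : BondGraph}
    (hG : EpsRegular ε G) {n m : ℕ} {f g : ℕ → Pt} (hf : IsStraightSeq ε G n f)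
    (hcrit : IsCritical δ n f) (hg : IsStraightSeq ε G m g)
    (hfirst : ∀ i ≤ m, s(g i, g (i + 1)) ≠ s(f 0, f 1))
    (hlast : ∀ i ≤ m, s(g i, g (i + 1)) ≠ s(f n, f (n + 1)))
    {t : Pt × Pt × Pt} (htf : t ∈ seqTriples n f) (htg : t ∈ seqTriples m g) :
    seqExcess m g < δ := by
  have opposite : ∀ i < m, ∀ j < n, g (i + 2) = f j → g (i + 1) = f (j + 1) →
      seqExcess m g < δ := by
    intro i hi j hj h0 h1
    have he : ∀ i ≤ m, s(g (m + 1 - i), g (m + 1 - (i + 1))) = s(g (m - i), g (m - i + 1)) := by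
      intro i hi
      rw [Sym2.eq_swap, show m + 1 - (i + 1) = m - i by omega,
        show m + 1 - i = m - i + 1 by omega]
    rw [← hg.excess_reverse hε]
    refine hf.excess_lt_of_common hε hG hcrit (hg.reverse hε) (fun k hk => ?_) (fun k hk => ?_)
      (i := m - 1 - i) (by omega) hj ?_ ?_
    · rw [he k hk]
      exact hfirst _ (by omega)
    · rw [he k hk]
      exact hlast _ (by omega)
    · rw [← h0, show m + 1 - (m - 1 - i) = i + 2 by omega]
    · rw [← h1, show m + 1 - (m - 1 - i + 1) = i + 1 by omega]
  rcases mem_seqTriples.1 htf with ⟨j, hj, rfl⟩ | ⟨j, hj, rfl⟩ <;>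
    rcases mem_seqTriples.1 htg with ⟨i, hi, hij⟩ | ⟨i, hi, hij⟩ <;>
    simp only [Prod.mk.injEq] at hij
  · exact hf.excess_lt_of_common hε hG hcrit hg hfirst hlast hi hj hij.2.2 hij.2.1
  · exact opposite i hi j hj hij.2.2 hij.2.1
  · exact opposite i hi j hj hij.1 hij.2.1
  · exact hf.excess_lt_of_common hε hG hcrit hg hfirst hlast hi hj hij.1 hij.2.1

lemma nth_eq_getElem (γ : List Pt) {i : ℕ} (hi : i < γ.length) : nth γ i = γ[i] := by
  simp [nth, hi]

lemma IsStraightPath.isStraightSeq {ε : ℝ} {G : BondGraph} {γ : List Pt}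
    (h : IsStraightPath ε G γ) : IsStraightSeq ε G (γ.length - 2) (nth γ) := by
  obtain ⟨hlen, -, hchain, hang, hnodup⟩ := h
  refine ⟨fun i hi => ?_, fun i hi => hang i (by omega), fun i hi j hj hij => ?_⟩
  · rw [nth_eq_getElem γ (by omega), nth_eq_getElem γ (by omega)]
    exact List.isChain_iff_getElem.1 hchain i (by omega)
  · have hl : (pathEdges γ).length = γ.length - 1 := by simp [pathEdges]
    have hget : ∀ k (hk : k < (pathEdges γ).length),
        (pathEdges γ)[k] = s(nth γ k, nth γ (k + 1)) := by
      intro k hk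
      rw [nth_eq_getElem γ (by omega), nth_eq_getElem γ (by omega)]
      simp [pathEdges]
    refine (hnodup.getElem_inj_iff (hi := by omega) (hj := by omega)).1 ?_
    rw [hget i (by omega), hget j (by omega), hij]

/-- The graph obtained by deleting a set of edges. -/
def BondGraph.deleteEdges (G : BondGraph) (S : Set (Sym2 Pt)) : BondGraph where
  V := G.V
  finV := G.finV
  E := G.E \ S
  not_diag e he := G.not_diag e he.1
  mem_V e he := G.mem_V e he.1

lemma Fbond_deleteEdges_le (G : BondGraph) (S : Finset (Sym2 Pt)) :
    Fbond (G.deleteEdges S) ≤ Fbond G + 2 * S.card := by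
  classical
  have hdeg : ∀ x, deg G x ≤ deg (G.deleteEdges S) x + (S.filter (fun e => x ∈ e)).card := by
    intro x
    have hfin : ∀ H : BondGraph, (nbhd H x).Finite := fun H =>
      H.finV.subset fun y hy => H.mem_V _ hy y (by simp)
    set B : Set Pt := {y | s(x, y) ∈ S}
    have hmaps : Set.MapsTo (fun y => s(x, y)) B (S.filter (fun e => x ∈ e)) := by
      intro y hy
      simpa [B] using hy
    have hinj : Set.InjOn (fun y => s(x, y)) B := fun y _ z _ hyz => Sym2.congr_right.1 hyz
    have hB : B.Finite := Set.Finite.of_injOn hmaps hinj (Finset.finite_toSet _)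
    have hcard : B.ncard ≤ (S.filter (fun e => x ∈ e)).card := by
      rw [← Set.ncard_coe_finset]
      exact Set.ncard_le_ncard_of_injOn _ hmaps hinj (Finset.finite_toSet _)
    have hsub : nbhd G x ⊆ nbhd (G.deleteEdges S) x ∪ B := by
      intro y hy
      by_cases h : s(x, y) ∈ S
      · exact Or.inr h
      · exact Or.inl ⟨hy, h⟩
    calc deg G x ≤ (nbhd (G.deleteEdges S) x ∪ B).ncard :=
          Set.ncard_le_ncard hsub ((hfin _).union hB)
      _ ≤ deg (G.deleteEdges S) x + B.ncard := Set.ncard_union_le _ _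
      _ ≤ _ := by omega
  have hcount : ∑ x ∈ G.finV.toFinset, (S.filter (fun e => x ∈ e)).card ≤ 2 * S.card := by
    have := Finset.sum_card_bipartiteAbove_eq_sum_card_bipartiteBelow
      (s := G.finV.toFinset) (t := S) (fun x e => x ∈ e)
    unfold Finset.bipartiteAbove Finset.bipartiteBelow at this
    rw [this, mul_comm]
    refine Finset.sum_le_card_nsmul _ _ _ fun e _ => ?_
    induction e using Sym2.ind with
    | _ a b =>
      refine (Finset.card_le_card (t := {a, b}) fun x hx => ?_).trans Finset.card_le_two
      simpa using (Finset.mem_filter.1 hx).2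
  unfold Fbond
  rw [show (G.deleteEdges S).V = G.V from rfl, finsum_mem_eq_finite_toFinset_sum _ G.finV,
    finsum_mem_eq_finite_toFinset_sum _ G.finV]
  have hsum : ∑ x ∈ G.finV.toFinset, ((4 : ℤ) - deg (G.deleteEdges S) x) ≤
      ∑ x ∈ G.finV.toFinset, (((4 : ℤ) - deg G x) + (S.filter (fun e => x ∈ e)).card) :=
    Finset.sum_le_sum fun x _ => by have := hdeg x; omega
  rw [Finset.sum_add_distrib] at hsum
  have : (∑ x ∈ G.finV.toFinset, ((S.filter (fun e => x ∈ e)).card : ℤ)) ≤ 2 * S.card := by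
    exact_mod_cast hcount
  linarith

lemma V3Hyp.nonneg {ε : ℝ} {v3 : ℝ → ℝ} (h : V3Hyp ε v3) {θ : ℝ} (h0 : 0 ≤ θ)
    (h1 : θ ≤ 2 * π) : 0 ≤ v3 θ := by
  by_cases hθ : θ ∈ ({π / 2, π, 3 * π / 2} : Set ℝ)
  · rcases hθ with rfl | rfl | rfl
    · exact h.zero_pi_half.ge
    · exact h.zero_pi.ge
    · exact h.zero_three_pi_half.ge
  · exact (h.pos θ h0 h1 hθ).le

lemma V3Hyp.nonneg_cwAngle {ε : ℝ} {v3 : ℝ → ℝ} (h : V3Hyp ε v3) (u v : Pt) :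
    0 ≤ v3 (cwAngle u v) :=
  h.nonneg (cwAngle_mem_Ico u v).1 (cwAngle_mem_Ico u v).2.le

lemma edgeLen_nonneg (e : Sym2 Pt) : 0 ≤ edgeLen e := by
  induction e using Sym2.ind with
  | _ x y => exact dist_nonneg (x := x) (y := y)

lemma V2Hyp.add_one_nonneg {ε r0 : ℝ} {v2 : ℝ → EReal} (h : V2Hyp ε r0 v2) {r : ℝ}
    (hr : 0 ≤ r) : 0 ≤ v2 r + 1 := by
  have := add_le_add_left (h.ge_neg_one r hr) 1
  have h1 : (-1 : EReal) + 1 = 0 := by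
    rw [← EReal.coe_one, ← EReal.coe_neg, ← EReal.coe_add]; simp
  rwa [h1] at this

lemma V2Hyp.eq_one {ε r0 : ℝ} {v2 : ℝ → EReal} (h : V2Hyp ε r0 v2) {r : ℝ}
    (hr : 0 ≤ r) (hz : v2 r + 1 = 0) : r = 1 := by
  by_contra hne
  have hlt := h.gt_neg_one r hr hne
  induction hv : v2 r with
  | bot => rw [hv] at hlt; exact not_lt_bot hlt
  | top =>
    rw [hv, ← EReal.coe_one, EReal.top_add_coe] at hz
    exact EReal.top_ne_zero hz
  | coe a =>
    rw [hv] at hz hlt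
    rw [← EReal.coe_one, ← EReal.coe_add, ← EReal.coe_zero, EReal.coe_eq_coe_iff] at hz
    rw [← EReal.coe_one, ← EReal.coe_neg, EReal.coe_lt_coe_iff] at hlt
    linarith

/-- A set of angles of `G` is critical if it is the set of angles of a critical straight path. -/
def IsCriticalTriples (ε : ℝ) (G : BondGraph) (T : Finset (Pt × Pt × Pt)) : Prop :=
  ∃ n f, IsStraightSeq ε G n f ∧ IsCritical (π / 6 - ε) n f ∧ seqTriples n f = T

lemma exists_maximal_critical_family (ε : ℝ) (G : BondGraph) :
    ∃ F : Finset (Finset (Pt × Pt × Pt)), (∀ T ∈ F, IsCriticalTriples ε G T) ∧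
      (F : Set (Finset (Pt × Pt × Pt))).PairwiseDisjoint id ∧
      ∀ T, IsCriticalTriples ε G T → T.Nonempty → ∃ T' ∈ F, ¬ Disjoint T T' := by
  classical
  set P : Finset (Finset (Pt × Pt × Pt)) → Prop := fun F =>
    (∀ T ∈ F, IsCriticalTriples ε G T) ∧ (F : Set (Finset (Pt × Pt × Pt))).PairwiseDisjoint id
  have hsub : ∀ T, IsCriticalTriples ε G T → T ⊆ G.finite_triples.toFinset := by
    rintro T ⟨n, f, hf, -, rfl⟩ t ht
    exact (Set.Finite.mem_toFinset _).2 (hf.seqTriples_subset t ht)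
  have hfin : {F | P F}.Finite := by
    refine (Finset.finite_toSet G.finite_triples.toFinset.powerset.powerset).subset ?_
    intro F hF
    rw [Finset.mem_coe, Finset.mem_powerset]
    exact fun T hT => Finset.mem_powerset.2 (hsub T (hF.1 T hT))
  obtain ⟨F, hF, hmax⟩ := hfin.exists_maximal ⟨∅, by simp [P]⟩
  refine ⟨F, hF.1, hF.2, fun T hT hne => ?_⟩
  by_contra! hcon
  have hP : P (insert T F) := by
    refine ⟨fun T' hT' => ?_, ?_⟩
    · rcases Finset.mem_insert.1 hT' with rfl | h
      · exact hT
      · exact hF.1 T' h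
    · rw [Finset.coe_insert]
      exact hF.2.insert fun T' hT' _ => hcon T' hT'
  have hTF : T ∈ F := hmax hP (Finset.subset_insert T F) (Finset.mem_insert_self T F)
  exact hne.ne_empty (disjoint_self.1 (hcon T hTF))

/-- Deleting the extreme edges of a maximal disjoint family of critical paths leaves only straight
paths with small excess. -/
lemma exists_deleted_edges {ε : ℝ} (hε : ε < π / 6) {v3 : ℝ → ℝ} (hv3 : V3Hyp ε v3)
    {G : BondGraph} (hG : EpsRegular ε G) :
    ∃ S : Finset (Sym2 Pt),
      (∀ γ, IsStraightPath ε (G.deleteEdges S) γ → thetaEx γ < π / 6 - ε) ∧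
      ((S = ∅) ∨ (4 * S.card : ℝ) <
        ∑ t ∈ G.finite_triples.toFinset, v3 (cwAngle (t.1 - t.2.1) (t.2.2 - t.2.1))) := by
  classical
  obtain ⟨F, hF, hdisj, hmax⟩ := exists_maximal_critical_family ε G
  choose! n f hf hcrit hT using hF
  set S : Finset (Sym2 Pt) := F.biUnion fun T =>
    {s(f T 0, f T 1), s(f T (n T), f T (n T + 1))} with hS
  have hδ : 0 < π / 6 - ε := by linarith
  refine ⟨S, fun γ hγ => ?_, ?_⟩
  · by_contra! hcon
    obtain ⟨m, g, hg, hgcrit⟩ := exists_isCritical hδ hγ.isStraightSeq hcon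
    have hgG : IsStraightSeq ε G m g := hg.mono Set.sdiff_subset
    have hm : 0 < m := by
      by_contra! h0
      obtain rfl : m = 0 := by omega
      have := hgcrit.le_excess
      simp [seqExcess] at this
      linarith
    obtain ⟨T, hTF, hnd⟩ := hmax (seqTriples m g) ⟨m, g, hgG, hgcrit, rfl⟩
      ⟨_, mem_seqTriples.2 (Or.inl ⟨0, hm, rfl⟩)⟩
    obtain ⟨t, ht1, ht2⟩ := Finset.not_disjoint_iff.1 hnd
    rw [← hT T hTF] at ht2
    refine (hgcrit.le_excess.trans_lt ((hf T hTF).excess_lt_of_not_disjoint hε hG (hcrit T hTF)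
      hgG (fun i hi h => ?_) (fun i hi h => ?_) ht2 ht1)).false
    · exact (hg.edge i hi).2 (by rw [h]; exact Finset.mem_biUnion.2 ⟨T, hTF, by simp⟩)
    · exact (hg.edge i hi).2 (by rw [h]; exact Finset.mem_biUnion.2 ⟨T, hTF, by simp⟩)
  · rcases F.eq_empty_or_nonempty with h | hne
    · left
      rw [hS, h, Finset.biUnion_empty]
    · right
      have hcard : S.card ≤ F.card * 2 :=
        Finset.card_biUnion_le_card_mul _ _ _ fun T _ => Finset.card_le_two
      have hcard' : (S.card : ℝ) ≤ F.card * 2 := by exact_mod_cast hcard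
      have hsub : F.biUnion id ⊆ G.finite_triples.toFinset := by
        intro t ht
        obtain ⟨T, hTF, htT⟩ := Finset.mem_biUnion.1 ht
        rw [id, ← hT T hTF] at htT
        exact (Set.Finite.mem_toFinset _).2 ((hf T hTF).seqTriples_subset t htT)
      calc (4 * S.card : ℝ) ≤ ∑ T ∈ F, (8 : ℝ) := by
            rw [Finset.sum_const, nsmul_eq_mul]; linarith
        _ < ∑ T ∈ F, ∑ t ∈ T, v3 (cwAngle (t.1 - t.2.1) (t.2.2 - t.2.1)) := by
            refine Finset.sum_lt_sum_of_nonempty hne fun T hTF => ?_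
            have := (hf T hTF).energy_gt hε hv3 (hcrit T hTF).le_excess
            rwa [hT T hTF] at this
        _ = ∑ t ∈ F.biUnion id, v3 (cwAngle (t.1 - t.2.1) (t.2.2 - t.2.1)) :=
            (Finset.sum_biUnion hdisj).symm
        _ ≤ _ := Finset.sum_le_sum_of_subset_of_nonneg hsub fun t _ _ =>
            hv3.nonneg_cwAngle _ _

/-- **Lemma (construction of a graph with small angle excess / stratification).** -/
theorem stratification (ε : ℝ) (hε0 : 0 < ε) (hε : ε < π / 6)
    (r0 : ℝ) (hr0 : 1 < r0) (hr0' : r0 < Real.sqrt 2)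
    (v2 : ℝ → EReal) (v3 : ℝ → ℝ) (hv2 : V2Hyp ε r0 v2) (hv3 : V3Hyp ε v3)
    (G : BondGraph) (hreg : EpsRegular ε G) :
    ∃ Go : BondGraph, Go.V = G.V ∧ Go.E ⊆ G.E ∧
      (∀ γ : List Pt, IsStraightPath ε Go γ → thetaEx γ < π / 6 - ε) ∧
      ((Fbond Go : ℝ) : EReal) ≤ Fgraph v2 v3 G ∧
      (Fgraph v2 v3 G = ((Fbond Go : ℝ) : EReal) →
        G.E = Go.E ∧ (∀ e ∈ G.E, edgeLen e = 1) ∧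
          ∀ x y z : Pt, s(x, y) ∈ G.E → s(z, y) ∈ G.E → x ≠ z →
            cwAngle (x - y) (z - y) ∈ ({π / 2, π, 3 * π / 2} : Set ℝ)) := by
  obtain ⟨S, hpaths, hS⟩ := exists_deleted_edges hε hv3 hreg
  refine ⟨G.deleteEdges S, rfl, Set.sdiff_subset, hpaths, ?_⟩
  have hbond : (Fbond (G.deleteEdges S) : ℝ) ≤ Fbond G + 2 * S.card := by
    exact_mod_cast Fbond_deleteEdges_le G S
  unfold Fgraph Fex
  rw [finsum_mem_eq_finite_toFinset_sum _ G.finite_E,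
    finsum_mem_eq_finite_toFinset_sum _ G.finite_triples]
  have hA0 : ∀ e ∈ G.finite_E.toFinset, 0 ≤ v2 (edgeLen e) + 1 :=
    fun e _ => hv2.add_one_nonneg (edgeLen_nonneg e)
  have hB0 : ∀ t ∈ G.finite_triples.toFinset,
      0 ≤ v3 (cwAngle (t.1 - t.2.1) (t.2.2 - t.2.1)) := fun t _ => hv3.nonneg_cwAngle _ _
  have hAzero := Finset.sum_eq_zero_iff_of_nonneg hA0
  have hBzero := Finset.sum_eq_zero_iff_of_nonneg hB0
  have hA := Finset.sum_nonneg hA0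
  have hB := Finset.sum_nonneg hB0
  set A := ∑ e ∈ G.finite_E.toFinset, (v2 (edgeLen e) + 1)
  set B := ∑ t ∈ G.finite_triples.toFinset, v3 (cwAngle (t.1 - t.2.1) (t.2.2 - t.2.1))
  have hBS : (4 * S.card : ℝ) ≤ B := by
    rcases hS with rfl | h
    · simpa using hB
    · exact h.le
  clear_value A B
  induction A with
  | bot => simp at hA
  | top =>
    rw [EReal.top_add_coe, EReal.coe_add_top]
    exact ⟨le_top, fun h => absurd h.symm (EReal.coe_ne_top _)⟩
  | coe a =>
    rw [EReal.coe_nonneg] at hA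
    rw [← EReal.coe_add, ← EReal.coe_add, EReal.coe_le_coe_iff, EReal.coe_eq_coe_iff]
    refine ⟨by linarith, fun heq => ?_⟩
    have hempty : S = ∅ := hS.resolve_right fun h => by linarith
    subst hempty
    simp only [Finset.card_empty, Nat.cast_zero, mul_zero, add_zero] at hbond
    refine ⟨by simp [BondGraph.deleteEdges], fun e he => ?_, fun x y z hx hz hxz => ?_⟩
    · have ha : a = 0 := by linarith
      exact hv2.eq_one (edgeLen_nonneg e)
        (hAzero.1 (by rw [ha, EReal.coe_zero]) e ((Set.Finite.mem_toFinset _).2 he))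
    · have hb : B = 0 := by linarith
      have h0 := hBzero.1 hb (x, y, z) ((Set.Finite.mem_toFinset _).2 ⟨hx, hz, hxz⟩)
      by_contra hcon
      have hI := cwAngle_mem_Ico (x - y) (z - y)
      exact (hv3.pos _ hI.1 hI.2.le hcon).ne' h0

end
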